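/- arXiv:2007.04675 — 3 statements merged into one kernel-verified Lean document; each statement's English description precedes it below -/
import Mathlib

section
/- Fix b = 1/5 and c = 57/10, and let a < 0 be any negative real number. Let s = √(c² − 4ab), k = (c − s)/(2a), and let p₁ = (k a, −k, k) be the corresponding equilibrium of the Rössler vector field. Let J = [[0, −1, −1], [1, a, 0], [k, 0, k a − c]] be the Jacobian matrix of the Rössler vector field at p₁. Then every complex root μ of the characteristic polynomial of J (viewed over ℂ) satisfies Re(μ) < 0; in particular p₁ is a linearly (exponentially) stable hyperbolic equilibrium. -/
/-!
With `s = √(c² - 4ab)` and `d = k a - c = -(c + s)/2`, the inequality `4ab < 0` gives `|c| < s`,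
so `k > 0` and `d < 0`. The characteristic polynomial of `J` at `μ` is
`μ (μ - a) (μ - d) + (μ - d) + k (μ - a)`, so a root off `a` and `d` satisfies
`μ + 1/(μ - a) + k/(μ - d) = 0`. If `0 ≤ Re μ`, then `μ - a` and `μ - d` lie in the open right
half-plane, and so do their inverses; the left-hand side then has positive real part, a
contradiction.
-/

open Polynomial in
theorem charpoly_arrowhead_fin_three {R : Type*} [CommRing R] (e a d p q r t : R) :
    (!![e, p, q; r, a, 0; t, 0, d] : Matrix (Fin 3) (Fin 3) R).charpoly =
      (X - C e) * (X - C a) * (X - C d) - C (p * r) * (X - C d) - C (q * t) * (X - C a) := by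
  simp only [Matrix.charpoly, Matrix.det_fin_three, Matrix.charmatrix_apply, Matrix.of_apply,
    Matrix.diagonal_apply, Matrix.cons_val, Fin.reduceEq, if_true, if_false, map_mul, map_zero]
  ring

theorem inv_re_pos_of_re_pos {z : ℂ} (hz : 0 < z.re) : 0 < z⁻¹.re := by
  rw [Complex.inv_re]
  exact div_pos hz (Complex.normSq_pos.mpr (Complex.ne_zero_of_re_pos hz))

theorem re_neg_of_mul_mul_add_mul_add_mul_eq_zero {e a d μ : ℂ} {p q : ℝ}
    (he : e.re ≤ 0) (ha : a.re < 0) (hd : d.re < 0) (hp : 0 < p) (hq : 0 ≤ q)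
    (h : (μ - e) * (μ - a) * (μ - d) + p * (μ - d) + q * (μ - a) = 0) : μ.re < 0 := by
  by_contra! hμ
  have re_sub_e : 0 ≤ (μ - e).re := by rw [Complex.sub_re]; linarith
  have re_sub_a : 0 < (μ - a).re := by rw [Complex.sub_re]; linarith
  have re_sub_d : 0 < (μ - d).re := by rw [Complex.sub_re]; linarith
  have sub_a_ne : μ - a ≠ 0 := Complex.ne_zero_of_re_pos re_sub_a
  have sub_d_ne : μ - d ≠ 0 := Complex.ne_zero_of_re_pos re_sub_d
  have partial_fractions : (μ - e) + p * (μ - a)⁻¹ + q * (μ - d)⁻¹ = 0 := by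
    field_simp
    linear_combination h
  have re_eq_zero : (μ - e).re + p * (μ - a)⁻¹.re + q * (μ - d)⁻¹.re = 0 := by
    simpa only [Complex.add_re, Complex.re_ofReal_mul, Complex.zero_re]
      using congrArg Complex.re partial_fractions
  have re_a_term : 0 < p * (μ - a)⁻¹.re := mul_pos hp (inv_re_pos_of_re_pos re_sub_a)
  have re_d_term : 0 ≤ q * (μ - d)⁻¹.re := mul_nonneg hq (inv_re_pos_of_re_pos re_sub_d).le
  linarith

theorem re_neg_of_aeval_charpoly_arrowhead_eq_zero {e a d p q r t : ℝ}
    (he : e ≤ 0) (ha : a < 0) (hd : d < 0) (hpr : p * r < 0) (hqt : q * t ≤ 0) {μ : ℂ}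
    (hμ : Polynomial.aeval μ
      (!![e, p, q; r, a, 0; t, 0, d] : Matrix (Fin 3) (Fin 3) ℝ).charpoly = 0) : μ.re < 0 := by
  rw [charpoly_arrowhead_fin_three] at hμ
  simp only [map_sub, map_mul, Polynomial.aeval_X, Polynomial.aeval_C,
    Complex.coe_algebraMap] at hμ
  refine re_neg_of_mul_mul_add_mul_add_mul_eq_zero (e := e) (a := a) (d := d)
    he ha hd (neg_pos.mpr hpr) (neg_nonneg.mpr hqt) ?_
  push_cast
  linear_combination hμ

theorem rossler_equilibrium_linearly_stable_general {a b c k : ℝ} (ha : a < 0) (hb : 0 < b)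
    (hk : k = (c - √(c ^ 2 - 4 * a * b)) / (2 * a)) {μ : ℂ}
    (hμ : Polynomial.aeval μ
      (!![0, -1, -1; 1, a, 0; k, 0, k * a - c] : Matrix (Fin 3) (Fin 3) ℝ).charpoly = 0) :
    μ.re < 0 := by
  have sq_lt : c ^ 2 < c ^ 2 - 4 * a * b := by linarith [mul_neg_of_neg_of_pos ha hb]
  obtain ⟨neg_sqrt_lt, lt_sqrt⟩ := Real.sq_lt.mp sq_lt
  have k_pos : 0 < k := hk ▸ div_pos_of_neg_of_neg (by linarith) (by linarith)
  have d_eq : k * a - c = -(c + √(c ^ 2 - 4 * a * b)) / 2 := by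
    rw [hk]
    field_simp [ha.ne]
    ring
  exact re_neg_of_aeval_charpoly_arrowhead_eq_zero le_rfl ha (by linarith) (by norm_num)
    (by linarith) hμ

/-- For `b = 1/5`, `c = 57/10` and any `a < 0`, the equilibrium
`p₁ = (k a, -k, k)` of the Rössler system, with `k = (c - √(c² - 4ab))/(2a)`,
is linearly stable: every complex root `μ` of the characteristic polynomial of
the Jacobian matrix `J = [[0, -1, -1], [1, a, 0], [k, 0, k a - c]]` satisfies
`Re μ < 0`. -/
theorem rossler_equilibrium_linearly_stable
    (a : ℝ) (ha : a < 0)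
    (b c : ℝ) (hb : b = 1 / 5) (hc : c = 57 / 10)
    (s : ℝ) (hs : s = Real.sqrt (c ^ 2 - 4 * a * b))
    (k : ℝ) (hk : k = (c - s) / (2 * a))
    (J : Matrix (Fin 3) (Fin 3) ℝ)
    (hJ : J = !![(0 : ℝ), -1, -1; 1, a, 0; k, 0, k * a - c]) :
    ∀ μ : ℂ, (Polynomial.aeval μ) (Matrix.charpoly J) = 0 → μ.re < 0 := by
  subst hs hJ
  exact fun μ hμ => rossler_equilibrium_linearly_stable_general ha (by norm_num [hb]) hk hμ
end

section
/- Let f : ℝⁿ × ℝ → ℝⁿ be continuous and assume there is L ≥ 0 such that x ↦ f(x, λ) is L-Lipschitz for every λ ∈ ℝ. Let Λ : ℝ → ℝ be continuous with Λ(t) → λ₊ as t → +∞. Let Φ : ℝ × ℝ × ℝⁿ → ℝⁿ be the solution process of the nonautonomous equation ẋ = f(x, Λ(t)), i.e. Φ(s, s, x) = x for all s, x, and for each fixed s, x the map t ↦ Φ(t, s, x) is differentiable with derivative f(Φ(t, s, x), Λ(t)) at every t. Let ψ : ℝ × ℝⁿ → ℝⁿ be the flow of the future limit system ẋ = f(x,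 λ₊), i.e. ψ(0, x) = x and t ↦ ψ(t, x) has derivative f(ψ(t, x), λ₊) at every t. Suppose M : ℝ → Set ℝⁿ is a nonautonomous set whose fibres are nonempty, Φ-invariant in the sense that Φ(t, s, M(s)) = M(t) for all s, t ∈ ℝ, and uniformly bounded: there is a compact set K ⊆ ℝⁿ with M(t) ⊆ K for all t. Then the upper forward limit M₊∞ = ⋂_{τ ∈ ℝ} closure(⋃_{t ≥ τ} M(t)) is invariant under the future limit flow: ψ(t, M₊∞) = M₊∞ for every t ∈ ℝ. -/
open Filter

/-!
A solution of an asymptotically autonomous equation `ẋ = v(t, x)` whose velocity field converges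
uniformly on the region it occupies is, at late times, an approximate solution of the limit
equation `ẋ = g(x)`; by Grönwall's inequality it follows the limit flow over any fixed time span,
forwards or backwards. A point `x` of the upper forward limit is approached, at arbitrarily late
times `s`, by values `α s` of entire solutions inside `M`, so `α (s + t) ∈ M (s + t)` approaches
`ψ t x`, which therefore lies in the upper forward limit as well. Applying this to both `t` and `-t`
gives equality.
-/

open Set Topology

section UpperForwardLimit

variable {X : Type*} [TopologicalSpace X]

/-- The upper forward limit `M₊∞ = limsup_{t → ∞} M(t)` of a nonautonomous set, in the sense of
Painlevé and Kuratowski. -/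
def upperForwardLimit (M : ℝ → Set X) : Set X :=
  ⋂ τ : ℝ, closure (⋃ u ≥ τ, M u)

theorem mem_upperForwardLimit_iff_frequently {M : ℝ → Set X} {x : X} :
    x ∈ upperForwardLimit M ↔ ∀ U ∈ 𝓝 x, ∃ᶠ u in atTop, (U ∩ M u).Nonempty := by
  simp only [upperForwardLimit, mem_iInter, mem_closure_iff_nhds, inter_iUnion,
    nonempty_iUnion, frequently_atTop, exists_prop]
  exact ⟨fun h U hU τ => h τ U hU, fun h τ U hU => h U hU τ⟩

end UpperForwardLimit

theorem gronwallBound_mul_mul (c δ K ε x : ℝ) :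
    gronwallBound (c * δ) K (c * ε) x = c * gronwallBound δ K ε x := by
  unfold gronwallBound
  split_ifs <;> ring

theorem tendstoUniformlyOn_of_continuous_of_tendsto {X Y Z ι : Type*} [TopologicalSpace X]
    [TopologicalSpace Y] [UniformSpace Z] {f : X → Y → Z}
    (hf : Continuous fun p : X × Y => f p.1 p.2) {K : Set X} (hK : IsCompact K)
    {l : Filter ι} {y : ι → Y} {y₀ : Y} (hy : Tendsto y l (𝓝 y₀)) :
    TendstoUniformlyOn (fun i x => f x (y i)) (fun x => f x y₀) l K :=
  let F : C(Y, C(X, Z)) := ContinuousMap.curry ⟨fun p => f p.2 p.1, hf.comp continuous_swap⟩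
  ContinuousMap.tendsto_iff_forall_isCompact_tendstoUniformlyOn.1
    ((F.continuous.tendsto y₀).comp hy) K hK

theorem eventually_forall_uIcc_add {R : Type*} [AddCommGroup R] [LinearOrder R]
    [IsOrderedAddMonoid R] {p : R → Prop} (hp : ∀ᶠ u in atTop, p u) (t : R) :
    ∀ᶠ s in atTop, ∀ u ∈ uIcc s (s + t), p u :=
  (tendsto_id.uIcc (tendsto_atTop_add_const_right atTop t tendsto_id)).eventually
    (eventually_smallSets_forall.2 hp)

section IntegralCurve

variable {E : Type*} [NormedAddCommGroup E] [NormedSpace ℝ E]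
  {v w : ℝ → E → E} {g : E → E} {α β : ℝ → E} {L : NNReal} {a t δ ε : ℝ}

theorem dist_le_gronwallBound_of_isIntegralCurve_of_le (hw : ∀ u, LipschitzWith L (w u))
    (hα : IsIntegralCurve α v) (hβ : IsIntegralCurve β w) (hat : a ≤ t)
    (hvw : ∀ u ∈ Icc a t, dist (v u (α u)) (w u (α u)) ≤ ε) (h₀ : dist (α a) (β a) ≤ δ) :
    dist (α t) (β t) ≤ gronwallBound δ L ε (t - a) := by
  simpa using dist_le_of_approx_trajectories_ODE hw
    hα.continuous.continuousOn (fun u _ => (hα u).hasDerivWithinAt)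
    (fun u hu => hvw u (Ico_subset_Icc_self hu))
    hβ.continuous.continuousOn (fun u _ => (hβ u).hasDerivWithinAt)
    (fun u _ => (dist_self _).le) h₀ t ⟨hat, le_rfl⟩

theorem dist_le_gronwallBound_of_isIntegralCurve (hw : ∀ u, LipschitzWith L (w u))
    (hα : IsIntegralCurve α v) (hβ : IsIntegralCurve β w)
    (hvw : ∀ u ∈ uIcc a t, dist (v u (α u)) (w u (α u)) ≤ ε) (h₀ : dist (α a) (β a) ≤ δ) :
    dist (α t) (β t) ≤ gronwallBound δ L ε |t - a| := by
  rcases le_total a t with hat | hta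
  · rw [abs_of_nonneg (sub_nonneg.2 hat)]
    rw [uIcc_of_le hat] at hvw
    exact dist_le_gronwallBound_of_isIntegralCurve_of_le hw hα hβ hat hvw h₀
  · -- Time reversal `u ↦ -u` turns this into the forward estimate from `-a` to `-t`.
    rw [uIcc_of_ge hta] at hvw
    have hw' (u : ℝ) : LipschitzWith L (((-1 : ℝ) • w ∘ (· * (-1 : ℝ))) u) := by
      simpa [Function.comp_def] using! (hw (-u)).neg
    have hvw' (u : ℝ) (hu : u ∈ Icc (-a) (-t)) :
        dist (v (-u) (α (-u))) (w (-u) (α (-u))) ≤ ε :=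
      hvw (-u) ⟨le_neg.1 hu.2, neg_le.1 hu.1⟩
    simpa [abs_of_nonpos (sub_nonpos.2 hta), neg_add_eq_sub] using
      dist_le_gronwallBound_of_isIntegralCurve_of_le (a := -a) (t := -t) (ε := ε) (δ := δ) hw'
        (hα.comp_mul (-1)) (hβ.comp_mul (-1)) (neg_le_neg hta) (by simpa using hvw') (by simpa)

theorem exists_pos_eventually_dist_lt_of_tendstoUniformlyOn {K : Set E}
    (hvg : TendstoUniformlyOn v g atTop K) (hg : LipschitzWith L g) (t : ℝ) (hε : 0 < ε) :
    ∃ δ > 0, ∀ᶠ s in atTop, ∀ α β : ℝ → E, IsIntegralCurve α v → (∀ u, α u ∈ K) →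
      IsIntegralCurve β (fun _ => g) → dist (α s) (β 0) < δ → dist (α (s + t)) (β t) < ε := by
  obtain ⟨δ, hδ, hδε⟩ := exists_pos_mul_lt hε (gronwallBound 1 L 1 |t|)
  have hclose : ∀ᶠ u in atTop, ∀ x ∈ K, dist (g x) (v u x) < δ :=
    Metric.tendstoUniformlyOn_iff.1 hvg δ hδ
  refine ⟨δ, hδ, (eventually_forall_uIcc_add hclose t).mono fun s hs α β hα hαK hβ h₀ => ?_⟩
  calc dist (α (s + t)) (β t)
    _ = dist (α (s + t)) ((β ∘ (· - s)) (s + t)) := by simp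
    _ ≤ gronwallBound δ L δ |s + t - s| :=
        dist_le_gronwallBound_of_isIntegralCurve (fun _ => hg) hα (hβ.comp_sub s)
          (fun u hu => by simpa [dist_comm] using (hs u hu (α u) (hαK u)).le) (by simpa using h₀.le)
    _ = gronwallBound 1 L 1 |t| * δ := by
        simpa [mul_comm] using gronwallBound_mul_mul δ 1 L 1 |t|
    _ < ε := hδε

theorem flow_add_of_isIntegralCurve (hg : LipschitzWith L g) {ψ : ℝ → E → E}
    (hψ₀ : ∀ x, ψ 0 x = x) (hψ : ∀ x, IsIntegralCurve (ψ · x) fun _ => g) (s t : ℝ) (x : E) :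
    ψ (t + s) x = ψ t (ψ s x) := by
  have heq : (ψ · x) ∘ (· + s) = (ψ · (ψ s x)) :=
    ODE_solution_unique_univ (v := fun _ => g) (s := fun _ => univ) (t₀ := 0)
      (fun _ => hg.lipschitzOnWith) (fun u => ⟨(hψ x).comp_add s u, mem_univ _⟩)
      (fun u => ⟨hψ (ψ s x) u, mem_univ _⟩) (by simp [hψ₀])
  exact congrFun heq t

variable {K : Set E} {ψ : ℝ → E → E} {M : ℝ → Set E}

theorem isInvariant_upperForwardLimit (hvg : TendstoUniformlyOn v g atTop K)
    (hg : LipschitzWith L g) (hψ₀ : ∀ x, ψ 0 x = x)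
    (hψ : ∀ x, IsIntegralCurve (ψ · x) fun _ => g)
    (hM : ∀ s, ∀ z ∈ M s, ∃ α, IsIntegralCurve α v ∧ α s = z ∧ ∀ u, α u ∈ M u)
    (hMK : ∀ u, M u ⊆ K) : IsInvariant ψ (upperForwardLimit M) := by
  intro t x hx
  rw [mem_upperForwardLimit_iff_frequently] at hx ⊢
  intro U hU
  obtain ⟨ε, hε, hεU⟩ := Metric.mem_nhds_iff.1 hU
  obtain ⟨δ, hδ, htrack⟩ := exists_pos_eventually_dist_lt_of_tendstoUniformlyOn hvg hg t hε
  have hfreq : ∃ᶠ s in atTop, (U ∩ M (s + t)).Nonempty := by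
    refine ((hx _ (Metric.ball_mem_nhds x hδ)).and_eventually htrack).mono ?_
    rintro s ⟨⟨z, hzx, hzM⟩, hs⟩
    obtain ⟨α, hα, rfl, hαM⟩ := hM s z hzM
    have hnear : dist (α (s + t)) (ψ t x) < ε :=
      hs α (ψ · x) hα (fun u => hMK u (hαM u)) (hψ x) (by simpa [hψ₀] using hzx)
    exact ⟨α (s + t), hεU hnear, hαM (s + t)⟩
  exact (tendsto_atTop_add_const_right atTop t tendsto_id).frequently hfreq

theorem upperForwardLimit_invariant_future_flow_general (hvg : TendstoUniformlyOn v g atTop K)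
    (hg : LipschitzWith L g) (hψ₀ : ∀ x, ψ 0 x = x)
    (hψ : ∀ x, IsIntegralCurve (ψ · x) fun _ => g)
    (hM : ∀ s, ∀ z ∈ M s, ∃ α, IsIntegralCurve α v ∧ α s = z ∧ ∀ u, α u ∈ M u)
    (hMK : ∀ u, M u ⊆ K) (t : ℝ) : ψ t '' upperForwardLimit M = upperForwardLimit M := by
  have hinv := isInvariant_upperForwardLimit hvg hg hψ₀ hψ hM hMK
  refine (hinv t).image_subset.antisymm fun y hy => ⟨ψ (-t) y, hinv (-t) hy, ?_⟩
  rw [← flow_add_of_isIntegralCurve hg hψ₀ hψ, add_neg_cancel, hψ₀]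

end IntegralCurve

/-- Invariance of the upper forward limit: if `M` is a `Φ`-invariant, uniformly
bounded nonautonomous set with nonempty fibres for the parameter shift system
`ẋ = f(x, Λ(t))`, where `Λ(t) → λ₊` as `t → ∞`, then the upper forward limit
`M₊∞ = ⋂_τ closure (⋃_{t ≥ τ} M(t))` is invariant under the flow `ψ` of the
future limit system `ẋ = f(x, λ₊)`. -/
theorem upperForwardLimit_invariant_future_flow
    (n : ℕ)
    (f : EuclideanSpace ℝ (Fin n) → ℝ → EuclideanSpace ℝ (Fin n))
    (hfc : Continuous fun p : EuclideanSpace ℝ (Fin n) × ℝ => f p.1 p.2)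
    (L : NNReal) (hfl : ∀ lam : ℝ, LipschitzWith L (fun x => f x lam))
    (Λ : ℝ → ℝ) (hΛc : Continuous Λ)
    (lamp : ℝ) (hΛlim : Tendsto Λ atTop (nhds lamp))
    (Φ : ℝ → ℝ → EuclideanSpace ℝ (Fin n) → EuclideanSpace ℝ (Fin n))
    (hΦ0 : ∀ (s : ℝ) (x : EuclideanSpace ℝ (Fin n)), Φ s s x = x)
    (hΦ' : ∀ (s : ℝ) (x : EuclideanSpace ℝ (Fin n)) (t : ℝ),
      HasDerivAt (fun u => Φ u s x) (f (Φ t s x) (Λ t)) t)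
    (ψ : ℝ → EuclideanSpace ℝ (Fin n) → EuclideanSpace ℝ (Fin n))
    (hψ0 : ∀ x : EuclideanSpace ℝ (Fin n), ψ 0 x = x)
    (hψ' : ∀ (x : EuclideanSpace ℝ (Fin n)) (t : ℝ),
      HasDerivAt (fun u => ψ u x) (f (ψ t x) lamp) t)
    (M : ℝ → Set (EuclideanSpace ℝ (Fin n)))
    (hne : ∀ t : ℝ, (M t).Nonempty)
    (hinv : ∀ s t : ℝ, Φ t s '' M s = M t)
    (K : Set (EuclideanSpace ℝ (Fin n))) (hK : IsCompact K)
    (hMK : ∀ t : ℝ, M t ⊆ K) :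
    ∀ t : ℝ, ψ t '' (⋂ τ : ℝ, closure (⋃ u ≥ τ, M u)) =
      ⋂ τ : ℝ, closure (⋃ u ≥ τ, M u) :=
  upperForwardLimit_invariant_future_flow_general
    (tendstoUniformlyOn_of_continuous_of_tendsto hfc hK hΛlim)
    (hfl lamp) hψ0 hψ'
    (fun s z hz => ⟨(Φ · s z), hΦ' s z, hΦ0 s z, fun u => hinv s u ▸ mem_image_of_mem _ hz⟩) hMK
end

section
/- Let f : ℝⁿ × ℝ → ℝⁿ be continuous, continuously differentiable in its first argument, and assume there is L ≥ 0 such that x ↦ f(x, λ) is L-Lipschitz for every λ ∈ ℝ. Let Λ : ℝ → ℝ be continuous with Λ(t) → λ₋ as t → −∞. Let X₋ ∈ ℝⁿ satisfy f(X₋, λ₋) = 0, and suppose the derivative of x ↦ f(x, λ₋) at X₋ is represented by a real n×n matrix A such that every complex eigenvalue μ of A (every complex root of the characteristic polynomial of A over ℂ) satisfies Re(μ) < 0. Then there exists a solution x : ℝ → ℝⁿ of the nonautonomous equation, i.e. x is differentiable with x'(t) = f(x(t), Λ(t)) for all t ∈ ℝ, such that x(t) → X₋ as t → −∞. -/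
open Filter

/-!
If `f (·, λ₋)` has derivative `A` at the equilibrium `X₋`, the Euler step `x ↦ x + h f (x, λ₋)` has
derivative `B = 1 + h A` there. Since the eigenvalues of `A` lie in the open left half-plane, those
of `B` lie in the open unit disc for small `h > 0`, so `B ^ k → 0` by Gelfand's formula. Once
`‖B ^ N‖ ≤ 1 / 2`, the seminorm `p x = 2 ∑ k < N, ‖B ^ k x‖` satisfies `p (B x) + ‖x‖ ≤ p x` by
telescoping, hence the Euler step strictly decreases `p (x - X₋)` near `X₋`. By compactness of the
spheres of `p`, on each small sphere the Euler step of `f (·, Λ t)` does the same for all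
sufficiently early `t`.

As `p` is convex, its right derivative along a solution is at most its difference quotient along the
Euler step; so a small ball `p (x - X₋) ≤ η` is forward invariant up to some time `τ η`. For each
early time `t` intersect the balls with `t ≤ τ η`: this is a forward invariant family of nonempty
compact sets. Transporting the sets at times `s → -∞` to a fixed time `T` gives a decreasing family
of compact sets, and a solution through a common point at time `T` stays in every ball at all
sufficiently early times.
-/

open Set
open scoped Topology NNReal Polynomial

/-! ### Spectrum of the Euler step -/

theorem tendsto_pow_zero_of_spectralRadius_lt_one {𝔸 : Type*} [NormedRing 𝔸]
    [NormedAlgebra ℂ 𝔸] [CompleteSpace 𝔸] {a : 𝔸} (ha : spectralRadius ℂ a < 1) :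
    Tendsto (fun k : ℕ => a ^ k) atTop (𝓝 0) := by
  obtain ⟨r, har, hr1⟩ := ENNReal.lt_iff_exists_nnreal_btwn.mp ha
  refine squeeze_zero_norm' (a := fun k : ℕ => (r : ℝ) ^ k) ?_
    (tendsto_pow_atTop_nhds_zero_of_lt_one r.2 (by exact_mod_cast hr1))
  filter_upwards [(spectrum.pow_nnnorm_pow_one_div_tendsto_nhds_spectralRadius
    a).eventually_lt_const har, eventually_ne_atTop 0] with k hroot hk
  have hpow : (‖a ^ k‖₊ : ENNReal) ≤ (r : ENNReal) ^ k := by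
    rw [← ENNReal.rpow_natCast, ← ENNReal.rpow_inv_le_iff (by positivity), ← one_div]
    exact hroot.le
  exact_mod_cast hpow

theorem exists_pos_forall_norm_one_add_mul_lt_one {S : Set ℂ} (hS : IsCompact S)
    (hre : ∀ z ∈ S, z.re < 0) : ∃ h : ℝ, 0 < h ∧ ∀ z ∈ S, ‖1 + h * z‖ < 1 := by
  have hsq_pos : ∀ z ∈ S, 0 < ‖z‖ ^ 2 := fun z hz => by
    have : z ≠ 0 := fun h => by simpa [h] using hre z hz
    positivity
  have hcont : ContinuousOn (fun z : ℂ => -z.re / ‖z‖ ^ 2) S :=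
    Complex.continuous_re.neg.continuousOn.div (by fun_prop) fun z hz => (hsq_pos z hz).ne'
  have hpos : ∀ z ∈ S, 0 < -z.re / ‖z‖ ^ 2 := fun z hz =>
    div_pos (neg_pos.mpr (hre z hz)) (hsq_pos z hz)
  obtain ⟨h, hh, hle⟩ := hS.exists_forall_le' hcont hpos
  refine ⟨h, hh, fun z hz => ?_⟩
  have hstep : h * ‖z‖ ^ 2 ≤ -z.re := (le_div_iff₀ (hsq_pos z hz)).mp (hle z hz)
  have hsq : ‖1 + h * z‖ ^ 2 = 1 + h * (2 * z.re + h * ‖z‖ ^ 2) := by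
    simp only [← Complex.normSq_eq_norm_sq, Complex.normSq_apply, Complex.add_re, Complex.add_im,
      Complex.one_re, Complex.one_im, Complex.re_ofReal_mul, Complex.im_ofReal_mul]
    ring
  have hlt : ‖1 + h * z‖ ^ 2 < 1 := by
    rw [hsq]
    nlinarith [hre z hz]
  exact (sq_lt_one_iff₀ (norm_nonneg _)).mp hlt

theorem exists_pos_tendsto_one_add_smul_pow {𝔸 : Type*} [NormedRing 𝔸]
    [NormedAlgebra ℂ 𝔸] [CompleteSpace 𝔸] {a : 𝔸} (ha : ∀ μ ∈ spectrum ℂ a, μ.re < 0) :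
    ∃ h : ℝ, 0 < h ∧ Tendsto (fun k : ℕ => (1 + (h : ℂ) • a) ^ k) atTop (𝓝 0) := by
  cases subsingleton_or_nontrivial 𝔸
  · exact ⟨1, one_pos, tendsto_const_nhds.congr fun _ => Subsingleton.elim _ _⟩
  obtain ⟨h, hpos, hlt⟩ :=
    exists_pos_forall_norm_one_add_mul_lt_one (spectrum.isCompact (𝕜 := ℂ) a) ha
  refine ⟨h, hpos, tendsto_pow_zero_of_spectralRadius_lt_one ?_⟩
  have hspec : spectrum ℂ (1 + (h : ℂ) • a) = (fun z : ℂ => 1 + h * z) '' spectrum ℂ a := by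
    have hmap := spectrum.map_polynomial_aeval a (1 + (h : ℂ) • (Polynomial.X : ℂ[X]))
    simpa only [map_add, map_one, map_smul, Polynomial.aeval_X, Polynomial.eval_add,
      Polynomial.eval_one, Polynomial.eval_smul, Polynomial.eval_X, smul_eq_mul] using hmap
  refine spectrum.spectralRadius_lt_of_forall_lt (r := 1) _ ?_
  rw [hspec]
  rintro _ ⟨z, hz, rfl⟩
  exact_mod_cast hlt z hz

section RealMatrix

open scoped Matrix.Norms.L2Operator

theorem exists_pos_tendsto_one_add_smul_matrix_pow {ι : Type*} [Fintype ι] [DecidableEq ι]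
    {M : Matrix ι ι ℝ} (hM : ∀ μ : ℂ, Polynomial.aeval μ M.charpoly = 0 → μ.re < 0) :
    ∃ h : ℝ, 0 < h ∧ Tendsto (fun k : ℕ => (1 + h • M) ^ k) atTop (𝓝 0) := by
  obtain ⟨h, hpos, hlim⟩ :=
    exists_pos_tendsto_one_add_smul_pow (a := Complex.ofRealHom.mapMatrix M) fun μ hμ => by
      rw [Matrix.mem_spectrum_iff_isRoot_charpoly, RingHom.mapMatrix_apply, Matrix.charpoly_map,
        Polynomial.IsRoot.def, Polynomial.eval_map] at hμ
      exact hM μ hμ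
  have hre : Continuous fun N : Matrix ι ι ℂ => N.map Complex.re :=
    continuous_id.matrix_map Complex.continuous_re
  refine ⟨h, hpos, ?_⟩
  have hmap : ∀ k : ℕ, (1 + (h : ℂ) • Complex.ofRealHom.mapMatrix M) ^ k =
      Complex.ofRealHom.mapMatrix ((1 + h • M) ^ k) := fun k => by
    rw [map_pow, map_add, map_one]
    congr 2
    ext i j
    simp
  have hlim_re := (hre.tendsto 0).comp hlim
  simp only [Function.comp_def, hmap] at hlim_re
  convert hlim_re using 2
  · ext; simp
  · ext; simp

end RealMatrix

theorem exists_pos_tendsto_one_add_smul_clm_pow {E : Type*} [NormedAddCommGroup E]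
    [NormedSpace ℝ E] [FiniteDimensional ℝ E] {A : E →L[ℝ] E}
    (hA : ∀ μ : ℂ, Polynomial.aeval μ (A : E →ₗ[ℝ] E).charpoly = 0 → μ.re < 0) :
    ∃ h : ℝ, 0 < h ∧ Tendsto (fun k : ℕ => (1 + h • A) ^ k) atTop (𝓝 0) := by
  let b := Module.finBasis ℝ E
  let Φ := (Matrix.toLinAlgEquiv b).trans (Module.End.toContinuousLinearMap E)
  have hΦA : Φ (LinearMap.toMatrixAlgEquiv b A) = A := by
    simp only [Φ, AlgEquiv.trans_apply, Matrix.toLinAlgEquiv_toMatrixAlgEquiv]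
    rfl
  obtain ⟨h, hpos, hlim⟩ := exists_pos_tendsto_one_add_smul_matrix_pow
    (M := LinearMap.toMatrixAlgEquiv b A) fun μ hμ => hA μ (by
      rwa [← LinearMap.charpoly_toMatrix (A : E →ₗ[ℝ] E) b])
  have hΦ : Continuous Φ := LinearMap.continuous_of_finiteDimensional Φ.toLinearMap
  refine ⟨h, hpos, ?_⟩
  simpa [Function.comp_def, hΦA] using (hΦ.tendsto 0).comp hlim

/-! ### Decrease of an adapted seminorm under Euler steps -/

section AdaptedSeminorm

variable {𝕜 E : Type*} [NontriviallyNormedField 𝕜] [SeminormedAddCommGroup E] [NormedSpace 𝕜 E]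

/-- `x ↦ ∑ k < N, ‖B ^ k x‖`, a norm adapted to `B` when `B ^ N` is a contraction: then `B`
decreases it, although `B` need not decrease the original norm. -/
def orbitSeminorm (B : E →L[𝕜] E) (N : ℕ) : Seminorm 𝕜 E :=
  ∑ k ∈ Finset.range N, (normSeminorm 𝕜 E).comp (B ^ k : E →L[𝕜] E).toLinearMap

theorem orbitSeminorm_apply (B : E →L[𝕜] E) (N : ℕ) (x : E) :
    orbitSeminorm B N x = ∑ k ∈ Finset.range N, ‖(B ^ k) x‖ := by
  simp only [orbitSeminorm, sum_apply, Seminorm.comp_apply, coe_normSeminorm]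
  rfl

theorem continuous_orbitSeminorm (B : E →L[𝕜] E) (N : ℕ) : Continuous (orbitSeminorm B N) := by
  simp only [funext (orbitSeminorm_apply B N)]
  fun_prop

theorem orbitSeminorm_map_add_norm (B : E →L[𝕜] E) (N : ℕ) (x : E) :
    orbitSeminorm B N (B x) + ‖x‖ = orbitSeminorm B N x + ‖(B ^ N) x‖ := by
  have hshift : ∀ k, (B ^ k) (B x) = (B ^ (k + 1)) x := fun k => by rw [pow_succ]; rfl
  simp only [orbitSeminorm_apply, hshift]
  rw [← Finset.sum_range_succ, Finset.sum_range_succ', pow_zero, one_apply_eq_self]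

theorem exists_seminorm_map_add_norm_le {B : E →L[𝕜] E}
    (hB : Tendsto (fun k : ℕ => B ^ k) atTop (𝓝 0)) :
    ∃ p : Seminorm 𝕜 E, Continuous p ∧ ∀ x, p (B x) + ‖x‖ ≤ p x := by
  obtain ⟨N, hN⟩ :=
    ((tendsto_zero_iff_norm_tendsto_zero.mp hB).eventually_le_const one_half_pos).exists
  refine ⟨(2 : ℝ≥0) • orbitSeminorm B N, (continuous_orbitSeminorm B N).const_smul (2 : ℝ≥0),
    fun x => ?_⟩
  have hpow : ‖(B ^ N) x‖ ≤ 1 / 2 * ‖x‖ := (B ^ N).le_of_opNorm_le hN x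
  change 2 * orbitSeminorm B N (B x) + ‖x‖ ≤ 2 * orbitSeminorm B N x
  linarith [orbitSeminorm_map_add_norm B N x]

end AdaptedSeminorm

theorem exists_forall_seminorm_map_sub_lt {E : Type*} [NormedAddCommGroup E] [NormedSpace ℝ E]
    {p : Seminorm ℝ E} (hp : Continuous p) {B : E →L[ℝ] E} (hpB : ∀ x, p (B x) + ‖x‖ ≤ p x)
    {G : E → E} {X₀ : E} (hG : HasFDerivAt G B X₀) (hfix : G X₀ = X₀) :
    ∃ r > 0, ∀ x, p (x - X₀) ∈ Ioc 0 r → p (G x - X₀) < p (x - X₀) := by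
  obtain ⟨C, hC, hpC⟩ := Seminorm.bound_of_continuous_normedSpace p hp
  obtain ⟨δ, hδ, hlin⟩ := Metric.eventually_nhds_iff.mp
    (hG.isLittleO.def (c := 1 / (2 * C)) (by positivity))
  refine ⟨δ / 2, half_pos hδ, fun x ⟨hpos, hle⟩ => ?_⟩
  have hnorm : ‖x - X₀‖ ≤ p (x - X₀) := by linarith [hpB (x - X₀), apply_nonneg p (B (x - X₀))]
  have hne : 0 < ‖x - X₀‖ := norm_pos_iff.mpr fun h => by simp [h] at hpos
  have hrem : p (G x - X₀ - B (x - X₀)) ≤ 1 / 2 * ‖x - X₀‖ :=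
    calc p (G x - X₀ - B (x - X₀)) ≤ C * ‖G x - X₀ - B (x - X₀)‖ := hpC _
      _ ≤ C * (1 / (2 * C) * ‖x - X₀‖) := by
        have := hlin (y := x) (by rw [dist_eq_norm]; linarith)
        rw [hfix] at this
        gcongr
      _ = 1 / 2 * ‖x - X₀‖ := by field_simp
  calc p (G x - X₀) ≤ p (B (x - X₀)) + p (G x - X₀ - B (x - X₀)) := by
        simpa using map_add_le_add p (B (x - X₀)) (G x - X₀ - B (x - X₀))
    _ < p (x - X₀) := by linarith [hpB (x - X₀)]

theorem eventually_forall_seminorm_map_sub_lt {E Y : Type*} [NormedAddCommGroup E]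
    [NormedSpace ℝ E] [ProperSpace E] [TopologicalSpace Y] {p : Seminorm ℝ E} (hp : Continuous p)
    (hnorm : ∀ x, ‖x‖ ≤ p x) {G : Y → E → E} (hG : Continuous fun q : Y × E => G q.1 q.2)
    {y₀ : Y} {X₀ : E} {η : ℝ} (hlt : ∀ x, p (x - X₀) = η → p (G y₀ x - X₀) < η) :
    ∀ᶠ y in 𝓝 y₀, ∀ x, p (x - X₀) = η → p (G y x - X₀) < η := by
  have hcompact : IsCompact {x | p (x - X₀) = η} :=
    Metric.isCompact_of_isClosed_isBounded (isClosed_eq (by fun_prop) continuous_const)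
      (Metric.isBounded_closedBall.subset fun x (hx : p (x - X₀) = η) =>
        mem_closedBall_iff_norm.mpr ((hnorm _).trans hx.le))
  exact hcompact.eventually_forall_of_forall_eventually fun x hx =>
    ContinuousAt.eventually_lt (by fun_prop) continuousAt_const (hlt x hx)

/-! ### Forward invariance of convex sublevel sets -/

section ConvexBarrier

variable {E : Type*} [NormedAddCommGroup E] [NormedSpace ℝ E] {W : E → ℝ} {x : ℝ → E} {h : ℝ}

theorem eventually_slope_comp_lt_of_convexOn (hW : ConvexOn ℝ univ W)
    (hWc : Continuous W) {x' : E} {t ρ : ℝ} (hx : HasDerivAt x x' t) (hh : 0 < h)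
    (hρ : (W (x t + h • x') - W (x t)) / h < ρ) : ∀ᶠ s in 𝓝[>] t, slope (W ∘ x) t s < ρ := by
  have hslope : Tendsto (slope x t) (𝓝[>] t) (𝓝 x') :=
    (hasDerivAt_iff_tendsto_slope.mp hx).mono_left (nhdsWithin_mono t fun s hs => ne_of_gt hs)
  have hquot : Continuous fun q : E => (W (x t + h • q) - W (x t)) / h := by fun_prop
  filter_upwards [((hquot.tendsto x').comp hslope).eventually_lt_const hρ,
    Ioo_mem_nhdsGT (lt_add_of_pos_right t hh)] with s hs ⟨hts, hsh⟩
  have hθ : 0 ≤ (s - t) / h ∧ 0 ≤ 1 - (s - t) / h :=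
    ⟨div_nonneg (by linarith) hh.le, sub_nonneg.mpr ((div_le_one hh).mpr (by linarith))⟩
  have hcomb : (1 - (s - t) / h) • x t + ((s - t) / h) • (x t + h • slope x t s) = x s := by
    have hsub : (s - t) • slope x t s = x s - x t := sub_smul_slope x t s
    rw [smul_add, smul_smul, div_mul_cancel₀ _ hh.ne', hsub]
    module
  have hconv := hW.2 (mem_univ (x t)) (mem_univ (x t + h • slope x t s)) hθ.2 hθ.1 (by ring)
  rw [hcomb, smul_eq_mul, smul_eq_mul] at hconv
  refine lt_of_le_of_lt ?_ hs
  rw [slope_def_field, div_le_iff₀ (sub_pos.mpr hts)]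
  simp only [Function.comp_apply]
  calc W (x s) - W (x t) ≤ (s - t) / h * (W (x t + h • slope x t s) - W (x t)) := by linarith
    _ = (W (x t + h • slope x t s) - W (x t)) / h * (s - t) := by ring

theorem le_of_convexOn_of_euler_step_lt (hW : ConvexOn ℝ univ W) (hWc : Continuous W)
    {x' : ℝ → E} {a b η : ℝ} (hx : ∀ t ∈ Icc a b, HasDerivAt x (x' t) t) (hh : 0 < h)
    (hstep : ∀ t ∈ Icc a b, W (x t) = η → W (x t + h • x' t) < η) (ha : W (x a) ≤ η) :
    ∀ t ∈ Icc a b, W (x t) ≤ η := by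
  have hcont : ContinuousOn (W ∘ x) (Icc a b) :=
    hWc.comp_continuousOn fun t ht => (hx t ht).continuousAt.continuousWithinAt
  refine image_le_of_liminf_slope_right_lt_deriv_boundary hcont
    (f' := fun t => (W (x t + h • x' t) - W (x t)) / h) (B := fun _ => η) (B' := fun _ => 0)
    (fun t ht ρ hρ => (eventually_slope_comp_lt_of_convexOn hW hWc
      (hx t (Ico_subset_Icc_self ht)) hh hρ).frequently)
    ha (fun t => hasDerivAt_const t η) fun t ht hη => ?_
  have := hstep t (Ico_subset_Icc_self ht) hη
  exact div_neg_of_neg_of_pos (by simp only [Function.comp_apply] at hη; linarith) hh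

end ConvexBarrier

/-! ### Global solutions of Lipschitz equations -/

section GlobalSolutions

variable {E : Type*} [NormedAddCommGroup E] [NormedSpace ℝ E] {v : ℝ → E → E} {K : ℝ≥0}

theorem exists_isIntegralCurveOn_Icc_glue {x y : ℝ → E} {a b c : ℝ} (hab : a ≤ b)
    (hbc : b ≤ c) (hx : IsIntegralCurveOn x v (Icc a b)) (hy : IsIntegralCurveOn y v (Icc b c))
    (hxy : x b = y b) :
    ∃ z, EqOn z x (Icc a b) ∧ EqOn z y (Icc b c) ∧ IsIntegralCurveOn z v (Icc a c) := by
  classical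
  let z : ℝ → E := (Iic b).piecewise x y
  have hzx : EqOn z x (Icc a b) := (piecewise_eqOn (Iic b) x y).mono Icc_subset_Iic_self
  have hzy : EqOn z y (Icc b c) := fun t ht => by
    rcases ht.1.eq_or_lt with rfl | hlt
    · simpa [z] using hxy
    · simp [z, hlt]
  have hleft : ∀ t ∈ Icc a b, HasDerivWithinAt z (v t (z t)) (Icc a b) t := fun t ht => by
    rw [hzx ht]
    exact (hx t ht).congr hzx (hzx ht)
  have hright : ∀ t ∈ Icc b c, HasDerivWithinAt z (v t (z t)) (Icc b c) t := fun t ht => by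
    rw [hzy ht]
    exact (hy t ht).congr hzy (hzy ht)
  refine ⟨z, hzx, hzy, fun t ht => ?_⟩
  rw [← Icc_union_Icc_eq_Icc hab hbc]
  rcases lt_trichotomy t b with hlt | rfl | hgt
  · exact (hleft t ⟨ht.1, hlt.le⟩).union (HasFDerivWithinAt.of_notMem_closure (by simp [hlt]))
  · exact (hleft t ⟨hab, le_rfl⟩).union (hright t ⟨le_rfl, hbc⟩)
  · exact HasDerivWithinAt.union (HasFDerivWithinAt.of_notMem_closure (by simp [hgt]))
      (hright t ⟨hgt.le, ht.2⟩)

theorem eqOn_Ioo_of_isIntegralCurveOn (hv : ∀ t, LipschitzWith K (v t)) {x y : ℝ → E}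
    {a b t₀ : ℝ} (ht₀ : t₀ ∈ Ioo a b) (hx : IsIntegralCurveOn x v (Icc a b))
    (hy : IsIntegralCurveOn y v (Icc a b)) (hxy : x t₀ = y t₀) : EqOn x y (Ioo a b) :=
  ODE_solution_unique_of_mem_Ioo (s := fun _ => univ) (fun t _ => (hv t).lipschitzOnWith) ht₀
    (fun t ht => ⟨(hx t (Ioo_subset_Icc_self ht)).hasDerivAt (Icc_mem_nhds ht.1 ht.2), trivial⟩)
    (fun t ht => ⟨(hy t (Ioo_subset_Icc_self ht)).hasDerivAt (Icc_mem_nhds ht.1 ht.2), trivial⟩)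
    hxy

theorem eq_of_isIntegralCurve (hv : ∀ t, LipschitzWith K (v t)) {x y : ℝ → E} {t₀ : ℝ}
    (hx : IsIntegralCurve x v) (hy : IsIntegralCurve y v) (hxy : x t₀ = y t₀) : x = y :=
  ODE_solution_unique_univ (s := fun _ => univ) (fun t => (hv t).lipschitzOnWith)
    (fun t => ⟨hx t, trivial⟩) (fun t => ⟨hy t, trivial⟩) hxy

variable [CompleteSpace E]

theorem exists_isIntegralCurveOn_Icc_of_mul_sub_le_one (hv : ∀ t, LipschitzWith K (v t))
    (hc : ∀ x, Continuous (v · x)) {a b t₀ : ℝ} (ht₀ : t₀ ∈ Icc a b) (hK : 2 * K * (b - a) ≤ 1)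
    (x₀ : E) : ∃ x, x t₀ = x₀ ∧ IsIntegralCurveOn x v (Icc a b) := by
  obtain ⟨C, hC⟩ := isCompact_Icc.exists_bound_of_continuousOn (hc x₀).continuousOn (s := Icc a b)
  lift C to ℝ≥0 using (norm_nonneg _).trans (hC t₀ ht₀)
  lift b - a to ℝ≥0 using sub_nonneg.mpr (ht₀.1.trans ht₀.2) with d hd
  -- `v t` is bounded by `2 C` on the ball of radius `2 C d` because `K * (2 C d) ≤ C`.
  have hPL : IsPicardLindelof v ⟨t₀, ht₀⟩ x₀ (2 * C * d) 0 (2 * C) K := by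
    refine ⟨fun t _ => (hv t).lipschitzOnWith, fun x _ => (hc x).continuousOn,
      fun t ht x hx => ?_, ?_⟩
    · have hdist : ‖v t x - v t x₀‖ ≤ K * (2 * C * d) := by
        rw [← dist_eq_norm]
        exact ((hv t).dist_le_mul x x₀).trans (by gcongr; exact hx)
      calc ‖v t x‖ ≤ ‖v t x - v t x₀‖ + ‖v t x₀‖ := norm_le_norm_sub_add _ _
        _ ≤ K * (2 * C * d) + C := add_le_add hdist (hC t ht)
        _ = 2 * K * d * C + C := by ring
        _ ≤ 1 * C + C := by gcongr
        _ = (2 * C : ℝ≥0) := by push_cast; ring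
    · have hmax : max (b - t₀) (t₀ - a) ≤ d :=
        hd ▸ max_le (sub_le_sub_left ht₀.1 b) (sub_le_sub_right ht₀.2 a)
      push_cast
      rw [sub_zero]
      gcongr
  exact hPL.exists_eq_forall_mem_Icc_hasDerivWithinAt₀

theorem exists_isIntegralCurveOn_Icc (hv : ∀ t, LipschitzWith K (v t))
    (hc : ∀ x, Continuous (v · x)) {a b t₀ : ℝ} (ht₀ : t₀ ∈ Icc a b) (x₀ : E) :
    ∃ x, x t₀ = x₀ ∧ IsIntegralCurveOn x v (Icc a b) := by
  obtain ⟨n, hn⟩ := pow_unbounded_of_one_lt (2 * K * (b - a)) one_lt_two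
  replace hn := hn.le
  induction n generalizing a b t₀ x₀ with
  | zero => exact exists_isIntegralCurveOn_Icc_of_mul_sub_le_one hv hc ht₀ (by simpa using hn) x₀
  | succ n ih =>
    have hab : a ≤ b := ht₀.1.trans ht₀.2
    obtain ⟨m, hm⟩ : ∃ m, m = (a + b) / 2 := ⟨_, rfl⟩
    have ham : a ≤ m := by linarith
    have hmb : m ≤ b := by linarith
    have hleft : 2 * K * (m - a) ≤ (2 : ℝ) ^ n := by rw [pow_succ] at hn; subst hm; linarith
    have hright : 2 * K * (b - m) ≤ (2 : ℝ) ^ n := by rw [pow_succ] at hn; subst hm; linarith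
    rcases le_total t₀ m with hle | hge
    · obtain ⟨x, hx₀, hx⟩ := ih ⟨ht₀.1, hle⟩ x₀ hleft
      obtain ⟨y, hy₀, hy⟩ := ih (left_mem_Icc.mpr hmb) (x m) hright
      obtain ⟨z, hzx, -, hz⟩ := exists_isIntegralCurveOn_Icc_glue ham hmb hx hy hy₀.symm
      exact ⟨z, (hzx ⟨ht₀.1, hle⟩).trans hx₀, hz⟩
    · obtain ⟨y, hy₀, hy⟩ := ih ⟨hge, ht₀.2⟩ x₀ hright
      obtain ⟨x, hx₀, hx⟩ := ih (right_mem_Icc.mpr ham) (y m) hleft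
      obtain ⟨z, -, hzy, hz⟩ := exists_isIntegralCurveOn_Icc_glue ham hmb hx hy hx₀
      exact ⟨z, (hzy ⟨hge, ht₀.2⟩).trans hy₀, hz⟩

theorem exists_isIntegralCurve (hv : ∀ t, LipschitzWith K (v t)) (hc : ∀ x, Continuous (v · x))
    (t₀ : ℝ) (x₀ : E) : ∃ x, x t₀ = x₀ ∧ IsIntegralCurve x v := by
  have hlocal : ∀ R : ℝ, 0 < R →
      ∃ x, x t₀ = x₀ ∧ IsIntegralCurveOn x v (Icc (t₀ - R) (t₀ + R)) := fun R hR =>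
    exists_isIntegralCurveOn_Icc hv hc ⟨by linarith, by linarith⟩ x₀
  choose! X hX₀ hX using hlocal
  have hagree : ∀ R R', 0 < R → R ≤ R' → EqOn (X R) (X R') (Ioo (t₀ - R) (t₀ + R)) :=
    fun R R' hR hRR' => eqOn_Ioo_of_isIntegralCurveOn hv ⟨by linarith, by linarith⟩ (hX R hR)
      ((hX R' (by linarith)).mono (Icc_subset_Icc (by linarith) (by linarith)))
      ((hX₀ R hR).trans (hX₀ R' (by linarith)).symm)
  have hmem : ∀ t R : ℝ, |t - t₀| < R → t ∈ Ioo (t₀ - R) (t₀ + R) := fun t R h => by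
    constructor <;> linarith [abs_lt.mp h]
  refine ⟨fun t => X (|t - t₀| + 1) t, by simp [hX₀], fun t => ?_⟩
  have hR : 0 < |t - t₀| + 2 := by positivity
  have hnear : ∀ u, |u - t₀| < |t - t₀| + 1 → X (|u - t₀| + 1) u = X (|t - t₀| + 2) u :=
    fun u hu => hagree _ _ (by positivity) (by linarith) (hmem u _ (lt_add_one _))
  have hev : (fun u => X (|u - t₀| + 1) u) =ᶠ[𝓝 t] X (|t - t₀| + 2) := by
    filter_upwards [ContinuousAt.eventually_lt (f := fun u => |u - t₀|) (by fun_prop)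
      continuousAt_const (lt_add_one |t - t₀|)] with u hu using hnear u hu
  have ht := hmem t (|t - t₀| + 2) (by linarith)
  beta_reduce
  rw [hnear t (lt_add_one _)]
  exact ((hX _ hR t (Ioo_subset_Icc_self ht)).hasDerivAt
    (Icc_mem_nhds ht.1 ht.2)).congr_of_eventuallyEq hev

end GlobalSolutions

/-! ### Solutions trapped backward in time -/

section Pullback

variable {E : Type*} [NormedAddCommGroup E] [NormedSpace ℝ E] {v : ℝ → E → E} {K : ℝ≥0}

theorem isCompact_setOf_isIntegralCurve_apply [CompleteSpace E]
    (hv : ∀ t, LipschitzWith K (v t)) (hc : ∀ x, Continuous (v · x)) {S : Set E} (hS : IsCompact S)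
    {s t : ℝ} (hst : s ≤ t) :
    IsCompact {y | ∃ x, IsIntegralCurve x v ∧ x s ∈ S ∧ x t = y} := by
  choose X hXs hX using exists_isIntegralCurve hv hc s
  have hlip : ∀ y z, dist (X y t) (X z t) ≤ Real.exp (K * (t - s)) * dist y z := fun y z => by
    rw [mul_comm]
    exact dist_le_of_trajectories_ODE hv (hX y).continuous.continuousOn
      (fun u _ => (hX y u).hasDerivWithinAt) (hX z).continuous.continuousOn
      (fun u _ => (hX z u).hasDerivWithinAt) (by rw [hXs, hXs]) t ⟨hst, le_rfl⟩
  have himage : {y | ∃ x, IsIntegralCurve x v ∧ x s ∈ S ∧ x t = y} = (X · t) '' S := by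
    ext y
    constructor
    · rintro ⟨x, hx, hxs, rfl⟩
      exact ⟨x s, hxs, congrFun (eq_of_isIntegralCurve hv (hX _) hx (hXs _)) t⟩
    · rintro ⟨z, hz, rfl⟩
      exact ⟨X z, hX z, by rwa [hXs], rfl⟩
  rw [himage]
  exact hS.image (LipschitzWith.of_dist_le' hlip).continuous

theorem exists_isIntegralCurve_forall_mem [CompleteSpace E]
    (hv : ∀ t, LipschitzWith K (v t)) (hc : ∀ x, Continuous (v · x)) {B : ℝ → Set E} {T : ℝ}
    (hB : ∀ t ≤ T, IsCompact (B t)) (hne : ∀ t ≤ T, (B t).Nonempty)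
    (hinv : ∀ x, IsIntegralCurve x v → ∀ s t, s ≤ t → t ≤ T → x s ∈ B s → x t ∈ B t) :
    ∃ x, IsIntegralCurve x v ∧ ∀ t ≤ T, x t ∈ B t := by
  let R (s : Iic T) : Set E := {y | ∃ x, IsIntegralCurve x v ∧ x s ∈ B s ∧ x T = y}
  have hmono : Monotone R := by
    rintro s t hst _ ⟨x, hx, hxs, rfl⟩
    exact ⟨x, hx, hinv x hx s t hst t.2 hxs, rfl⟩
  have hRne (s : Iic T) : (R s).Nonempty := by
    obtain ⟨y, hy⟩ := hne s s.2
    obtain ⟨x, hxs, hx⟩ := exists_isIntegralCurve hv hc s y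
    exact ⟨x T, x, hx, hxs ▸ hy, rfl⟩
  have hRcompact (s : Iic T) : IsCompact (R s) :=
    isCompact_setOf_isIntegralCurve_apply hv hc (hB s s.2) s.2
  obtain ⟨y, hy⟩ := IsCompact.nonempty_iInter_of_directed_nonempty_isCompact_isClosed R
    hmono.directed_ge hRne hRcompact fun s => (hRcompact s).isClosed
  obtain ⟨x, hxT, hx⟩ := exists_isIntegralCurve hv hc T y
  refine ⟨x, hx, fun t ht => ?_⟩
  obtain ⟨z, hz, hzt, hzT⟩ := mem_iInter.mp hy ⟨t, ht⟩
  rwa [eq_of_isIntegralCurve hv hx hz (hxT.trans hzT.symm)]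

theorem exists_isIntegralCurve_tendsto_atBot_of_euler_step_lt [ProperSpace E]
    (hv : ∀ t, LipschitzWith K (v t)) (hc : ∀ x, Continuous (v · x)) {p : Seminorm ℝ E}
    (hp : Continuous p) (hnorm : ∀ x, ‖x‖ ≤ p x) {X₀ : E} {h r : ℝ} (hh : 0 < h) (hr : 0 < r)
    (hstep : ∀ η ∈ Ioc 0 r, ∀ᶠ t in atBot, ∀ x, p (x - X₀) = η → p (x + h • v t x - X₀) < η) :
    ∃ x, IsIntegralCurve x v ∧ Tendsto x atBot (𝓝 X₀) := by
  simp only [eventually_atBot] at hstep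
  choose! τ hτ using hstep
  let B (t : ℝ) : Set E := {x | ∀ η ∈ Ioc 0 r, t ≤ τ η → p (x - X₀) ≤ η}
  have hBclosed (t : ℝ) : IsClosed (B t) := by
    simp only [B, ofPred_forall]
    exact isClosed_iInter fun η => isClosed_iInter fun _ => isClosed_iInter fun _ =>
      isClosed_le (by fun_prop) continuous_const
  have hBcompact (t : ℝ) (ht : t ≤ τ r) : IsCompact (B t) :=
    Metric.isCompact_of_isClosed_isBounded (hBclosed t) (Metric.isBounded_closedBall.subset
      fun x hx => mem_closedBall_iff_norm.mpr ((hnorm _).trans (hx r ⟨hr, le_rfl⟩ ht)))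
  have hX₀B (t : ℝ) : X₀ ∈ B t := fun η hη _ => by simpa using hη.1.le
  have hinv (x : ℝ → E) (hx : IsIntegralCurve x v) (s t : ℝ) (hst : s ≤ t) (hxs : x s ∈ B s) :
      x t ∈ B t := fun η hη ht =>
    le_of_convexOn_of_euler_step_lt (W := fun y => p (y - X₀)) (x' := fun u => v u (x u))
      (by simpa [sub_eq_add_neg, Function.comp_def] using p.convexOn.translate_left (-X₀))
      (by fun_prop) (fun u _ => hx u) hh
      (fun u hu => hτ η hη u (hu.2.trans ht) (x u)) (hxs η hη (hst.trans ht)) t ⟨hst, le_rfl⟩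
  obtain ⟨x, hx, hxB⟩ := exists_isIntegralCurve_forall_mem hv hc hBcompact
    (fun t _ => ⟨X₀, hX₀B t⟩) fun x hx s t hst _ => hinv x hx s t hst
  refine ⟨x, hx, Metric.tendsto_nhds.mpr fun ε hε => ?_⟩
  have hη : min r (ε / 2) ∈ Ioc 0 r := ⟨lt_min hr (half_pos hε), min_le_left _ _⟩
  filter_upwards [eventually_le_atBot (τ r), eventually_le_atBot (τ (min r (ε / 2)))]
    with t htr htη
  calc dist (x t) X₀ ≤ p (x t - X₀) := (dist_eq_norm _ _).trans_le (hnorm _)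
    _ ≤ min r (ε / 2) := hxB t htr _ hη htη
    _ < ε := (min_le_right _ _).trans_lt (half_lt_self hε)

end Pullback

theorem charpoly_toEuclideanLin {𝕜 ι : Type*} [RCLike 𝕜] [Fintype ι] [DecidableEq ι]
    (A : Matrix ι ι 𝕜) : (Matrix.toEuclideanLin A).charpoly = A.charpoly := by
  rw [Matrix.toEuclideanLin_eq_toLin_orthonormal, Matrix.charpoly_toLin]

theorem exists_pullback_solution_limiting_to_stable_equilibrium_general {E Y : Type*}
    [NormedAddCommGroup E] [NormedSpace ℝ E] [FiniteDimensional ℝ E] [TopologicalSpace Y]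
    {f : E → Y → E} (hf : Continuous fun q : E × Y => f q.1 q.2) {L : ℝ≥0}
    (hlip : ∀ y, LipschitzWith L (f · y)) {Λ : ℝ → Y} (hΛ : Continuous Λ) {y₀ : Y}
    (hΛlim : Tendsto Λ atBot (𝓝 y₀)) {X₀ : E} (hX₀ : f X₀ y₀ = 0) {A : E →L[ℝ] E}
    (hA : HasFDerivAt (f · y₀) A X₀)
    (hstab : ∀ μ : ℂ, Polynomial.aeval μ (A : E →ₗ[ℝ] E).charpoly = 0 → μ.re < 0) :
    ∃ x : ℝ → E, (∀ t, HasDerivAt x (f (x t) (Λ t)) t) ∧ Tendsto x atBot (𝓝 X₀) := by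
  have : ProperSpace E := FiniteDimensional.proper ℝ E
  obtain ⟨h, hh, hpow⟩ := exists_pos_tendsto_one_add_smul_clm_pow hstab
  obtain ⟨p, hp, hpB⟩ := exists_seminorm_map_add_norm_le hpow
  have hnorm (x : E) : ‖x‖ ≤ p x := by linarith [hpB x, apply_nonneg p ((1 + h • A) x)]
  have hEuler : HasFDerivAt (fun x => x + h • f x y₀) (1 + h • A) X₀ :=
    (hasFDerivAt_id X₀).add (hA.const_smul h)
  obtain ⟨r, hr, hdecr⟩ := exists_forall_seminorm_map_sub_lt hp hpB hEuler (by simp [hX₀])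
  refine exists_isIntegralCurve_tendsto_atBot_of_euler_step_lt (v := fun t x => f x (Λ t))
    (fun t => hlip (Λ t)) (fun x => by fun_prop) hp hnorm hh hr fun η hη => ?_
  exact hΛlim.eventually (eventually_forall_seminorm_map_sub_lt hp hnorm
    (G := fun y x => x + h • f x y) (by fun_prop) fun x hx => hx ▸ hdecr x (hx ▸ hη))

/-- Existence of a pullback attracting solution: for the parameter shift system
`ẋ = f(x, Λ(t))` with `Λ(t) → λ₋` as `t → -∞`, if `X₋` is an equilibrium of the
past limit system `ẋ = f(x, λ₋)` whose Jacobian matrix `A` has all its complex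
eigenvalues with strictly negative real part, then there is a whole-line
solution of the nonautonomous system converging to `X₋` as `t → -∞`. -/
theorem exists_pullback_solution_limiting_to_stable_equilibrium
    (n : ℕ)
    (f : EuclideanSpace ℝ (Fin n) → ℝ → EuclideanSpace ℝ (Fin n))
    (hfc : Continuous fun p : EuclideanSpace ℝ (Fin n) × ℝ => f p.1 p.2)
    (hfd : ∀ lam : ℝ, ContDiff ℝ 1 (fun x => f x lam))
    (L : NNReal) (hfl : ∀ lam : ℝ, LipschitzWith L (fun x => f x lam))
    (Λ : ℝ → ℝ) (hΛc : Continuous Λ)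
    (lamm : ℝ) (hΛlim : Tendsto Λ atBot (nhds lamm))
    (Xm : EuclideanSpace ℝ (Fin n)) (hXm : f Xm lamm = 0)
    (A : Matrix (Fin n) (Fin n) ℝ)
    (hA : HasFDerivAt (fun x => f x lamm)
      (LinearMap.toContinuousLinearMap (Matrix.toEuclideanLin A)) Xm)
    (hstab : ∀ μ : ℂ, (Polynomial.aeval μ) (Matrix.charpoly A) = 0 → μ.re < 0) :
    ∃ x : ℝ → EuclideanSpace ℝ (Fin n),
      (∀ t : ℝ, HasDerivAt x (f (x t) (Λ t)) t) ∧
        Tendsto x atBot (nhds Xm) := by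
  exact exists_pullback_solution_limiting_to_stable_equilibrium_general hfc hfl hΛc hΛlim hXm hA
    fun μ hμ => hstab μ (by rwa [← charpoly_toEuclideanLin])
end
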